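/- Let f:[0,∞)→ℝ be continuous and bounded. Then for every integer n ≥ 2 and every x ≥ 0 with B̃_n((t−x)²;x) > 0, |B̃_n(f;x) − f(x)| ≤ 2·ω(f; √(B̃_n((t−x)²;x))), where B̃_n((t−x)²;x) denotes the operator applied to t ↦ (t−x)² and ω is the usual modulus of continuity. -/

import Mathlib

open Real MeasureTheory Filter Topology

/-- `p_n(x) = n² x² T(1) + n x U(1) + V(1)`. -/
noncomputable def pnx (T U V : ℝ → ℝ) (n : ℕ) (x : ℝ) : ℝ :=
  (n : ℝ) ^ 2 * x ^ 2 * T 1 + (n : ℝ) * x * U 1 + V 1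

/-- The Euler Beta function value `B(j, n+1) = Γ(j)Γ(n+1)/Γ(j+n+1)`. -/
noncomputable def betaB (j n : ℕ) : ℝ :=
  Real.Gamma (j : ℝ) * Real.Gamma ((n : ℝ) + 1) / Real.Gamma ((j : ℝ) + (n : ℝ) + 1)

/-- The Baskakov–Durrmeyer type operator `B̃_n(f;x)`. -/
noncomputable def BDop (ξ S T U V : ℝ → ℝ) (Θ : ℕ → ℝ → ℝ) (n : ℕ) (f : ℝ → ℝ) (x : ℝ) : ℝ :=
  (S 1 * ξ (pnx T U V n x))⁻¹ *
    (Θ 0 ((n : ℝ) * x) * f 0 +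
      ∑' j : ℕ, (Θ (j + 1) ((n : ℝ) * x) / betaB (j + 1) n) *
        ∫ s in Set.Ioi (0 : ℝ), s ^ j * (1 + s) ^ (-((n : ℝ) + (j : ℝ) + 2)) * f s)

/-- The usual modulus of continuity of `f` on `[0,∞)`. -/
noncomputable def modCont (f : ℝ → ℝ) (δ : ℝ) : ℝ :=
  sSup {d : ℝ | ∃ x y : ℝ, 0 ≤ x ∧ 0 ≤ y ∧ |x - y| ≤ δ ∧ d = |f x - f y|}

theorem modCont_le (f : ℝ → ℝ) (hfb : ∃ M : ℝ, ∀ x : ℝ, 0 ≤ x → |f x| ≤ M) (δ : ℝ)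
    (x y : ℝ) (hx : 0 ≤ x) (hy : 0 ≤ y) (h : |x - y| ≤ δ) : |f x - f y| ≤ modCont f δ := by
  obtain ⟨M, hM⟩ := hfb
  apply le_csSup
  · refine ⟨M + M, ?_⟩
    rintro d ⟨a, b, ha, hb, -, rfl⟩
    exact (abs_sub _ _).trans (add_le_add (hM a ha) (hM b hb))
  · exact ⟨x, y, hx, hy, h, rfl⟩

theorem modCont_mul (f : ℝ → ℝ) (hfb : ∃ M : ℝ, ∀ x : ℝ, 0 ≤ x → |f x| ≤ M) (δ : ℝ)
    (k : ℕ) : ∀ (x y : ℝ), 0 ≤ x → 0 ≤ y → |x - y| ≤ (k + 1) * δ →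
      |f x - f y| ≤ (k + 1) * modCont f δ := by
  induction k with
  | zero =>
    intro x y hx hy h
    simpa using modCont_le f hfb δ x y hx hy (by simpa using h)
  | succ k ih =>
    intro x y hx hy h
    push_cast at h ⊢
    have hk : (0 : ℝ) < k + 1 + 1 := by positivity
    have e : |x - y| / (k + 1 + 1) ≤ δ := by
      rw [div_le_iff₀ hk]; linarith
    have h1 := modCont_le f hfb δ x (((k + 1) * x + y) / (k + 1 + 1)) hx (by positivity) (by
      have : x - ((k + 1) * x + y) / (k + 1 + 1) = (x - y) / (k + 1 + 1) := by
        field_simp; ring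
      rw [this, abs_div, abs_of_pos hk]; exact e)
    have h2 := ih (((k + 1) * x + y) / (k + 1 + 1)) y (by positivity) hy (by
      have : ((k + 1) * x + y) / (k + 1 + 1) - y = (k + 1) * ((x - y) / (k + 1 + 1)) := by
        field_simp; ring
      rw [this, abs_mul, abs_div, abs_of_pos hk, abs_of_pos (by positivity : (0 : ℝ) < k + 1)]
      gcongr)
    have h3 := abs_sub_le (f x) (f (((k + 1) * x + y) / (k + 1 + 1))) (f y)
    linarith

theorem modCont_quad (f : ℝ → ℝ) (hfb : ∃ M : ℝ, ∀ x : ℝ, 0 ≤ x → |f x| ≤ M) (δ : ℝ)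
    (hδ : 0 < δ) (x y : ℝ) (hx : 0 ≤ x) (hy : 0 ≤ y) :
    |f x - f y| ≤ modCont f δ * (1 + (x - y) ^ 2 / δ ^ 2) := by
  have hW : 0 ≤ modCont f δ := by
    simpa using modCont_le f hfb δ x x hx hx (by simpa using hδ.le)
  have ha : 0 ≤ |x - y| / δ := by positivity
  have h1 := modCont_mul f hfb δ ⌊|x - y| / δ⌋₊ x y hx hy (by
    rw [← div_le_iff₀ hδ]; exact (Nat.lt_floor_add_one _).le)
  have h2 := Nat.floor_le ha
  have h3 : (⌊|x - y| / δ⌋₊ : ℝ) ≤ (|x - y| / δ) ^ 2 := by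
    rcases Nat.eq_zero_or_pos ⌊|x - y| / δ⌋₊ with h | h
    · rw [h]; simp; positivity
    · have : (1 : ℝ) ≤ (⌊|x - y| / δ⌋₊ : ℝ) := by exact_mod_cast h
      nlinarith
  rw [div_pow, sq_abs] at h3
  nlinarith

/-- Beta integral on the half line. -/
theorem beta_nat (b : ℕ) (a : ℕ) :
    IntegrableOn (fun s : ℝ => s ^ a * ((1 + s) ^ (a + b + 2))⁻¹) (Set.Ioi 0) ∧
    ∫ s in Set.Ioi (0 : ℝ), s ^ a * ((1 + s) ^ (a + b + 2))⁻¹ =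
      (a.factorial : ℝ) * b.factorial / (a + b + 1).factorial := by
  have htop : ∀ m : ℕ, m ≠ 0 → Tendsto (fun s : ℝ => ((1 + s) ^ m)⁻¹) atTop (𝓝 0) := by
    intro m hm
    exact tendsto_inv_atTop_zero.comp ((tendsto_pow_atTop hm).comp
      (tendsto_atTop_add_const_left _ _ tendsto_id))
  induction a with
  | zero =>
    have hd : ∀ s ∈ Set.Ici (0 : ℝ), HasDerivAt (fun s : ℝ => -((1 + s) ^ (b + 1))⁻¹ / (b + 1))
        (s ^ 0 * ((1 + s) ^ (0 + b + 2))⁻¹) s := by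
      intro s hs
      have hs' : (0 : ℝ) < 1 + s := by have : (0 : ℝ) ≤ s := hs; linarith
      have h1 : HasDerivAt (fun s : ℝ => (1 + s) ^ (b + 1)) (((b : ℝ) + 1) * (1 + s) ^ b) s := by
        refine HasDerivAt.congr_deriv (((hasDerivAt_id s).const_add 1).fun_pow (b + 1)) ?_
        simp
      refine HasDerivAt.congr_deriv ((h1.fun_inv (by positivity)).fun_neg.div_const ((b : ℝ) + 1)) ?_
      field_simp
      ring
    have hl : Tendsto (fun s : ℝ => -((1 + s) ^ (b + 1))⁻¹ / ((b : ℝ) + 1)) atTop (𝓝 0) := by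
      simpa using (htop (b + 1) (by omega)).neg.div_const ((b : ℝ) + 1)
    have hnn : ∀ s ∈ Set.Ioi (0 : ℝ), 0 ≤ s ^ 0 * ((1 + s) ^ (0 + b + 2))⁻¹ := by
      intro s hs
      have : (0 : ℝ) < s := hs
      positivity
    refine ⟨integrableOn_Ioi_deriv_of_nonneg' hd hnn hl, ?_⟩
    rw [integral_Ioi_of_hasDerivAt_of_nonneg' hd hnn hl]
    simp only [zero_add, Nat.factorial_succ, Nat.factorial_zero]
    have := Nat.factorial_pos b
    push_cast
    field_simp
    simp
  | succ a ih =>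
    obtain ⟨ih1, ih2⟩ := ih
    have hIntS : IntegrableOn (fun s : ℝ => s ^ (a + 1) * ((1 + s) ^ (a + 1 + b + 2))⁻¹)
        (Set.Ioi 0) := by
      refine Integrable.mono' ih1 (by fun_prop) ?_
      refine (ae_restrict_mem measurableSet_Ioi).mono fun s hs => ?_
      have hs : (0 : ℝ) < s := hs
      rw [Real.norm_of_nonneg (by positivity)]
      rw [← div_eq_mul_inv, ← div_eq_mul_inv, div_le_div_iff₀ (by positivity) (by positivity)]
      have : s ^ a * (1 + s) ^ (a + 1 + b + 2) - s ^ (a + 1) * (1 + s) ^ (a + b + 2)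
        = s ^ a * (1 + s) ^ (a + b + 2) := by ring
      have h2 : 0 ≤ s ^ a * (1 + s) ^ (a + b + 2) := by positivity
      linarith
    refine ⟨hIntS, ?_⟩
    have hd : ∀ s ∈ Set.Ici (0 : ℝ), HasDerivAt (fun s : ℝ => s ^ (a + 1) * ((1 + s) ^ (a + b + 2))⁻¹)
        (((a : ℝ) + 1) * (s ^ a * ((1 + s) ^ (a + b + 2))⁻¹) -
          ((a : ℝ) + b + 2) * (s ^ (a + 1) * ((1 + s) ^ (a + 1 + b + 2))⁻¹)) s := by
      intro s hs
      have hs' : (0 : ℝ) < 1 + s := by have : (0 : ℝ) ≤ s := hs; linarith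
      have h1 : HasDerivAt (fun s : ℝ => (1 + s) ^ (a + b + 2)) (((a : ℝ) + b + 2) * (1 + s) ^ (a + b + 1)) s := by
        refine HasDerivAt.congr_deriv (((hasDerivAt_id s).const_add 1).fun_pow (a + b + 2)) ?_
        simp
      refine HasDerivAt.congr_deriv ((hasDerivAt_pow (a + 1) s).fun_mul (h1.fun_inv (by positivity))) ?_
      rw [Nat.add_sub_cancel]
      push_cast
      field_simp
      ring
    have hl : Tendsto (fun s : ℝ => s ^ (a + 1) * ((1 + s) ^ (a + b + 2))⁻¹) atTop (𝓝 0) := by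
      refine squeeze_zero' ?_ ?_ (htop (b + 1) (by omega))
      · filter_upwards [eventually_gt_atTop 0] with s hs
        positivity
      · filter_upwards [eventually_gt_atTop 0] with s hs
        have e : a + b + 2 = (a + 1) + (b + 1) := by ring
        rw [e, pow_add (1 + s), mul_inv, ← mul_assoc]
        have : s ^ (a + 1) * ((1 + s) ^ (a + 1))⁻¹ ≤ 1 := by
          rw [← div_eq_mul_inv, div_le_one (by positivity)]
          gcongr
          linarith
        exact mul_le_of_le_one_left (by positivity) this
    have hI1 := ih1.const_mul ((a : ℝ) + 1)
    have hI2 := hIntS.const_mul ((a : ℝ) + b + 2)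
    have key := integral_Ioi_of_hasDerivAt_of_tendsto' hd (hI1.sub hI2) hl
    rw [integral_sub hI1 hI2, integral_const_mul, integral_const_mul, ih2] at key
    have e : a + 1 + b + 1 = (a + b + 1) + 1 := by ring
    rw [e, Nat.factorial_succ, Nat.factorial_succ]
    have := Nat.factorial_pos (a + b + 1)
    simp at key
    push_cast
    have hk : (0 : ℝ) < (a : ℝ) + b + 2 := by positivity
    have key' : ((a : ℝ) + b + 2) * (∫ s in Set.Ioi (0 : ℝ), s ^ (a + 1) * ((1 + s) ^ (a + 1 + b + 2))⁻¹)
      = ((a : ℝ) + 1) * (a.factorial * b.factorial / (a + b + 1).factorial) := by linarith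
    rw [← mul_right_inj' hk.ne', key']
    field_simp
    ring

theorem weight_eq (n j : ℕ) (s : ℝ) (hs : 0 < s) :
    s ^ j * (1 + s) ^ (-((n : ℝ) + (j : ℝ) + 2)) = s ^ j * ((1 + s) ^ (j + n + 2))⁻¹ := by
  rw [Real.rpow_neg (by linarith), ← Real.rpow_natCast (1 + s) (j + n + 2)]
  congr 4
  push_cast; ring

theorem betaB_eq (n j : ℕ) : betaB (j + 1) n =
    (j.factorial : ℝ) * n.factorial / (j + n + 1).factorial := by
  unfold betaB
  have e : ((j + 1 : ℕ) : ℝ) + n + 1 = ((j + n + 1 : ℕ) : ℝ) + 1 := by push_cast; ring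
  rw [e, Real.Gamma_nat_eq_factorial, Real.Gamma_nat_eq_factorial]
  push_cast
  rw [Real.Gamma_nat_eq_factorial]

theorem betaB_pos (n j : ℕ) : 0 < betaB (j + 1) n := by
  rw [betaB_eq]; positivity

/-- abbreviation for the kernel -/
noncomputable def wgt (n j : ℕ) (s : ℝ) : ℝ := s ^ j * (1 + s) ^ (-((n : ℝ) + (j : ℝ) + 2))

theorem wgt_nonneg (n j : ℕ) (s : ℝ) (hs : 0 < s) : 0 ≤ wgt n j s := by
  unfold wgt; positivity

theorem wgt_int (n j : ℕ) : IntegrableOn (wgt n j) (Set.Ioi 0) ∧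
    ∫ s in Set.Ioi (0 : ℝ), wgt n j s = betaB (j + 1) n := by
  have h := beta_nat n j
  have e : Set.EqOn (fun s : ℝ => s ^ j * ((1 + s) ^ (j + n + 2))⁻¹) (wgt n j) (Set.Ioi 0) :=
    fun s hs => (weight_eq n j s hs).symm
  refine ⟨h.1.congr_fun e measurableSet_Ioi, ?_⟩
  rw [betaB_eq, ← h.2]
  exact (setIntegral_congr_fun measurableSet_Ioi e).symm

theorem wgt_int2 (m j : ℕ) : IntegrableOn (fun s => wgt (m + 2) j s * s ^ 2) (Set.Ioi 0) ∧
    ∫ s in Set.Ioi (0 : ℝ), wgt (m + 2) j s * s ^ 2 =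
      betaB (j + 1) (m + 2) * ((j + 1) * (j + 2) / ((m + 1) * (m + 2))) := by
  have h := beta_nat m (j + 2)
  have e : Set.EqOn (fun s : ℝ => s ^ (j + 2) * ((1 + s) ^ (j + 2 + m + 2))⁻¹)
      (fun s => wgt (m + 2) j s * s ^ 2) (Set.Ioi 0) := by
    intro s hs
    have hs : (0 : ℝ) < s := hs
    have e2 : j + 2 + m + 2 = j + (m + 2) + 2 := by ring
    simp only [wgt]
    rw [weight_eq _ _ _ hs, e2]
    ring
  refine ⟨h.1.congr_fun e measurableSet_Ioi, ?_⟩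
  rw [betaB_eq, ← setIntegral_congr_fun measurableSet_Ioi e, h.2]
  have e2 : j + 2 + m + 1 = j + (m + 2) + 1 := by ring
  rw [e2, Nat.factorial_succ (j + 1), Nat.factorial_succ j, Nat.factorial_succ (m + 1),
    Nat.factorial_succ m]
  push_cast
  field_simp
  ring

theorem wgt_int3 (m j : ℕ) (x : ℝ) :
    IntegrableOn (fun s => wgt (m + 2) j s * (s - x) ^ 2) (Set.Ioi 0) ∧
    ∫ s in Set.Ioi (0 : ℝ), wgt (m + 2) j s * (s - x) ^ 2 ≤
      betaB (j + 1) (m + 2) * (2 * ((j + 1) * (j + 2)) + 2 * x ^ 2) := by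
  have h1 := wgt_int (m + 2) j
  have h2 := wgt_int2 m j
  have hb : IntegrableOn (fun s => 2 * (wgt (m + 2) j s * s ^ 2) + 2 * x ^ 2 * wgt (m + 2) j s)
    (Set.Ioi 0) := (h2.1.const_mul 2).add (h1.1.const_mul (2 * x ^ 2))
  have hle : ∀ s ∈ Set.Ioi (0 : ℝ), wgt (m + 2) j s * (s - x) ^ 2 ≤
      2 * (wgt (m + 2) j s * s ^ 2) + 2 * x ^ 2 * wgt (m + 2) j s := by
    intro s hs
    have hw := wgt_nonneg (m + 2) j s hs
    nlinarith [mul_nonneg hw (sq_nonneg (s + x))]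
  have hi : IntegrableOn (fun s => wgt (m + 2) j s * (s - x) ^ 2) (Set.Ioi 0) := by
    refine Integrable.mono' hb (h1.1.aestronglyMeasurable.mul (by fun_prop)) ?_
    refine (ae_restrict_mem measurableSet_Ioi).mono fun s hs => ?_
    rw [Real.norm_of_nonneg (mul_nonneg (wgt_nonneg _ _ _ hs) (sq_nonneg _))]
    exact hle s hs
  refine ⟨hi, ?_⟩
  refine (setIntegral_mono_on hi hb measurableSet_Ioi hle).trans ?_
  rw [integral_add (h2.1.const_mul 2) (h1.1.const_mul (2 * x ^ 2)), integral_const_mul,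
    integral_const_mul, h1.2, h2.2]
  have hB := betaB_pos (m + 2) j
  have : ((j : ℝ) + 1) * (j + 2) / (((m : ℝ) + 1) * (m + 2)) ≤ (j + 1) * (j + 2) := by
    apply div_le_self (by positivity)
    have : (0 : ℝ) ≤ m := by positivity
    nlinarith
  nlinarith

theorem summable_poly (c : ℕ → ℝ) (hc : ∀ j, 0 ≤ c j) (r : ℝ) (hr : 1 < r)
    (h : Summable fun j => c j * r ^ j) :
    Summable fun j : ℕ => c (j + 1) * (((j : ℝ) + 1) * (j + 2)) := by
  have h2 : Summable fun j : ℕ => c j * (j : ℝ) ^ 2 := by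
    refine Summable.of_norm_bounded_eventually_nat h ?_
    have ht := tendsto_pow_const_div_const_pow_of_one_lt 2 hr
    filter_upwards [ht.eventually (gt_mem_nhds (show (0 : ℝ) < 1 by norm_num))] with j hj
    have : 0 < r ^ j := by positivity
    rw [div_lt_one this] at hj
    rw [Real.norm_of_nonneg (mul_nonneg (hc j) (by positivity))]
    exact mul_le_mul_of_nonneg_left hj.le (hc j)
  have h3 := ((summable_nat_add_iff 1).2 h2).mul_left 2
  refine Summable.of_nonneg_of_le (fun j => mul_nonneg (hc _) (by positivity)) (fun j => ?_) h3
  have := hc (j + 1)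
  push_cast
  have hj : (0 : ℝ) ≤ j := by positivity
  have : ((j : ℝ) + 1) * (j + 2) ≤ 2 * (j + 1) ^ 2 := by nlinarith
  nlinarith

theorem stmt14
    (ρ : ℝ) (hρ : 1 < ρ)
    (ξ S T U V : ℝ → ℝ) (Θ : ℕ → ℝ → ℝ)
    (p q r u v : ℕ → ℝ)
    (hξser : ∀ t : ℝ, HasSum (fun j : ℕ => p j * t ^ j) (ξ t))
    (hξnn : ∀ t : ℝ, 0 ≤ ξ t)
    (hSser : ∀ s ∈ Set.Ioo (-ρ) ρ, HasSum (fun j : ℕ => q j * s ^ j) (S s))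
    (hTser : ∀ s ∈ Set.Ioo (-ρ) ρ, HasSum (fun j : ℕ => r j * s ^ (j + 1)) (T s))
    (hUser : ∀ s ∈ Set.Ioo (-ρ) ρ, HasSum (fun j : ℕ => u j * s ^ (j + 2)) (U s))
    (hVser : ∀ s ∈ Set.Ioo (-ρ) ρ, HasSum (fun j : ℕ => v j * s ^ (j + 3)) (V s))
    (hS1 : 0 < S 1)
    (hT'1 : deriv T 1 = 0) (hT''1 : deriv (deriv T) 1 = 0) (hU'1 : deriv U 1 = 1)
    (hΘnn : ∀ (j : ℕ) (y : ℝ), 0 ≤ y → 0 ≤ Θ j y)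
    (hgen : ∀ y : ℝ, 0 ≤ y → ∀ s ∈ Set.Ioo (-ρ) ρ,
      HasSum (fun j : ℕ => Θ j y * s ^ j) (S s * ξ (y ^ 2 * T s + y * U s + V s)))
    (hξp : ∀ (m : ℕ), 1 ≤ m → ∀ y : ℝ, 0 ≤ y → 0 < ξ (pnx T U V m y))
    (f : ℝ → ℝ) (hfc : ContinuousOn f (Set.Ici 0))
    (hfb : ∃ M : ℝ, ∀ x : ℝ, 0 ≤ x → |f x| ≤ M)
    (n : ℕ) (hn : 2 ≤ n) (x : ℝ) (hx : 0 ≤ x)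
    (hpos : 0 < BDop ξ S T U V Θ n (fun t => (t - x) ^ 2) x) :
    |BDop ξ S T U V Θ n f x - f x| ≤
      2 * modCont f (Real.sqrt (BDop ξ S T U V Θ n (fun t => (t - x) ^ 2) x)) := by
  obtain ⟨m, rfl⟩ : ∃ m, n = m + 2 := ⟨n - 2, by omega⟩
  set D := BDop ξ S T U V Θ (m + 2) (fun t => (t - x) ^ 2) x with hD
  set W := modCont f (Real.sqrt D) with hWd
  have hquad : ∀ s : ℝ, 0 ≤ s → |f s - f x| ≤ W * (1 + (s - x) ^ 2 / D) := by
    intro s hs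
    have := modCont_quad f hfb (Real.sqrt D) (Real.sqrt_pos.2 hpos) s x hs hx
    rwa [Real.sq_sqrt hpos.le] at this
  set y : ℝ := ((m + 2 : ℕ) : ℝ) * x with hy
  have hy0 : 0 ≤ y := by positivity
  set K : ℝ := S 1 * ξ (pnx T U V (m + 2) x) with hK
  have hKpos : 0 < K := mul_pos hS1 (hξp (m + 2) (by omega) x hx)
  have hsumK : HasSum (fun j => Θ j y) K := by
    have := hgen y hy0 1 ⟨by linarith, hρ⟩
    simp only [one_pow, mul_one] at this
    convert this using 3
    simp only [pnx, hy]; ring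
  have hK1 : HasSum (fun j => Θ (j + 1) y) (K - Θ 0 y) := by
    have := (hasSum_nat_add_iff' 1).2 hsumK
    simpa using this
  have hpoly : Summable fun j : ℕ => Θ (j + 1) y * (((j : ℝ) + 1) * (j + 2)) :=
    summable_poly (fun j => Θ j y) (fun j => hΘnn j y hy0) ((1 + ρ) / 2) (by linarith)
      (hgen y hy0 ((1 + ρ) / 2) ⟨by linarith, by linarith⟩).summable
  -- coefficients
  set A : ℕ → ℝ := fun j => Θ (j + 1) y / betaB (j + 1) (m + 2) with hA
  have hAnn : ∀ j, 0 ≤ A j := fun j => div_nonneg (hΘnn _ _ hy0) (betaB_pos _ _).le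
  have hAB : ∀ j, A j * betaB (j + 1) (m + 2) = Θ (j + 1) y := fun j =>
    div_mul_cancel₀ _ (betaB_pos _ _).ne'
  have hop : ∀ g : ℝ → ℝ, K * BDop ξ S T U V Θ (m + 2) g x =
      Θ 0 y * g 0 + ∑' j : ℕ, A j * ∫ s in Set.Ioi (0 : ℝ), wgt (m + 2) j s * g s := by
    intro g
    unfold BDop
    rw [← hK, mul_inv_cancel_left₀ hKpos.ne']
    rfl
  -- second moment
  set Q : ℕ → ℝ := fun j => ∫ s in Set.Ioi (0 : ℝ), wgt (m + 2) j s * (s - x) ^ 2 with hQ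
  have hQnn : ∀ j, 0 ≤ Q j := fun j => setIntegral_nonneg measurableSet_Ioi fun s hs =>
    mul_nonneg (wgt_nonneg _ _ _ hs) (sq_nonneg _)
  have hQs : Summable fun j => A j * Q j := by
    refine Summable.of_nonneg_of_le (fun j => mul_nonneg (hAnn j) (hQnn j)) (fun j => ?_)
      ((hpoly.mul_left 2).add (hK1.summable.mul_left (2 * x ^ 2)))
    refine (mul_le_mul_of_nonneg_left (wgt_int3 m j x).2 (hAnn j)).trans (le_of_eq ?_)
    rw [← mul_assoc, hAB]; ring
  have hDK : K * D = Θ 0 y * x ^ 2 + ∑' j, A j * Q j := by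
    rw [hD, hop]; simp [hQ]
  -- f integrals
  obtain ⟨M, hM⟩ := hfb
  have hfi : ∀ j, IntegrableOn (fun s => wgt (m + 2) j s * f s) (Set.Ioi 0) := by
    intro j
    have hw := (wgt_int (m + 2) j).1
    refine Integrable.mono' (hw.const_mul M) (hw.aestronglyMeasurable.mul
      ((hfc.mono Set.Ioi_subset_Ici_self).aestronglyMeasurable measurableSet_Ioi)) ?_
    refine (ae_restrict_mem measurableSet_Ioi).mono fun s hs => ?_
    have h0 := wgt_nonneg (m + 2) j s hs
    rw [norm_mul, Real.norm_of_nonneg h0, mul_comm]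
    exact mul_le_mul_of_nonneg_right (hM s (le_of_lt hs)) h0
  set F : ℕ → ℝ := fun j => ∫ s in Set.Ioi (0 : ℝ), wgt (m + 2) j s * f s with hF
  have hFx : ∀ j, |F j - f x * betaB (j + 1) (m + 2)| ≤
      W * (betaB (j + 1) (m + 2) + Q j / D) := by
    intro j
    have hw := wgt_int (m + 2) j
    have h3 := wgt_int3 m j x
    have e1 : F j - f x * betaB (j + 1) (m + 2) =
        ∫ s in Set.Ioi (0 : ℝ), (wgt (m + 2) j s * f s - f x * wgt (m + 2) j s) := by
      rw [integral_sub (hfi j) (hw.1.const_mul _), integral_const_mul, hw.2]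
    have hI : IntegrableOn (fun s => W * (wgt (m + 2) j s + wgt (m + 2) j s * (s - x) ^ 2 / D))
        (Set.Ioi 0) := (hw.1.add (h3.1.div_const D)).const_mul W
    have e2 : W * (betaB (j + 1) (m + 2) + Q j / D) =
        ∫ s in Set.Ioi (0 : ℝ), W * (wgt (m + 2) j s + wgt (m + 2) j s * (s - x) ^ 2 / D) := by
      rw [integral_const_mul, integral_add hw.1 (h3.1.div_const D), integral_div, hw.2]
    rw [e1, e2, ← Real.norm_eq_abs]
    refine norm_integral_le_of_norm_le hI ?_
    refine (ae_restrict_mem measurableSet_Ioi).mono fun s hs => ?_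
    have h0 := wgt_nonneg (m + 2) j s hs
    have : wgt (m + 2) j s * f s - f x * wgt (m + 2) j s = wgt (m + 2) j s * (f s - f x) := by ring
    rw [this, norm_mul, Real.norm_of_nonneg h0, Real.norm_eq_abs]
    refine (mul_le_mul_of_nonneg_left (hquad s (le_of_lt hs)) h0).trans (le_of_eq ?_)
    ring
  -- termwise bound
  have hterm : ∀ j, |A j * F j - f x * Θ (j + 1) y| ≤ W * (Θ (j + 1) y + A j * Q j / D) := by
    intro j
    have e : A j * F j - f x * Θ (j + 1) y = A j * (F j - f x * betaB (j + 1) (m + 2)) := by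
      rw [← hAB j]; ring
    rw [e, abs_mul, abs_of_nonneg (hAnn j)]
    refine (mul_le_mul_of_nonneg_left (hFx j) (hAnn j)).trans (le_of_eq ?_)
    rw [← hAB j]; ring
  have hR : HasSum (fun j => W * (Θ (j + 1) y + A j * Q j / D))
      (W * ((K - Θ 0 y) + (∑' j, A j * Q j) / D)) :=
    (hK1.add (hQs.hasSum.div_const D)).mul_left W
  have hds : Summable fun j => A j * F j - f x * Θ (j + 1) y :=
    Summable.of_norm_bounded hR.summable hterm
  have hAF : Summable fun j => A j * F j := by
    have := hds.add (hK1.summable.mul_left (f x))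
    simpa using this
  have hsub : ∑' j, (A j * F j - f x * Θ (j + 1) y) = ∑' j, A j * F j - f x * (K - Θ 0 y) :=
    (hAF.hasSum.sub (hK1.mul_left (f x))).tsum_eq
  have hbound : |∑' j, (A j * F j - f x * Θ (j + 1) y)| ≤
      W * ((K - Θ 0 y) + (∑' j, A j * Q j) / D) :=
    by rw [← Real.norm_eq_abs]; exact tsum_of_norm_bounded hR hterm
  have h0 : |Θ 0 y * (f 0 - f x)| ≤ W * (Θ 0 y + Θ 0 y * x ^ 2 / D) := by
    have hth := hΘnn 0 y hy0
    rw [abs_mul, abs_of_nonneg hth]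
    refine (mul_le_mul_of_nonneg_left (hquad 0 le_rfl) hth).trans (le_of_eq ?_)
    ring
  have hmain : K * (BDop ξ S T U V Θ (m + 2) f x - f x) =
      Θ 0 y * (f 0 - f x) + ∑' j, (A j * F j - f x * Θ (j + 1) y) := by
    rw [mul_sub, hop, hsub]; ring
  have hfin : K * |BDop ξ S T U V Θ (m + 2) f x - f x| ≤ K * (2 * W) := by
    rw [← abs_of_pos hKpos, ← abs_mul, abs_of_pos hKpos, hmain]
    refine (abs_add_le _ _).trans ((add_le_add h0 hbound).trans (le_of_eq ?_))
    have : ∑' j, A j * Q j = K * D - Θ 0 y * x ^ 2 := by linarith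
    rw [this]
    field_simp
    ring
  exact le_of_mul_le_mul_left hfin hKpos
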